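/- arXiv:1505.07369 — 4 statements merged into one kernel-verified Lean document; each statement's English description precedes it below -/
import Mathlib

section
/- Under the one-cluster model with finite fourth moments, for all j, k, ℓ ∈ {1, …, n}: E[(v + ε_j)(v + ε_k)(v + ε_ℓ) w] = τ² η^{-1} [ τ² (3 − κ_v) + κ_ε σ_j² · 1{j = k = ℓ} + σ_j² (1{j = k, j ≠ ℓ} − 1{j = k}) + σ_j² (1{j = ℓ, j ≠ k} − 1{j = ℓ}) + σ_k² (1{k = ℓ, k ≠ j} − 1{k = ℓ}) ], where w = (Σ_{h=1}^n λ_h − 1) v + Σ_{h=1}^n λ_h ε_h. -/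
open MeasureTheory ProbabilityTheory

section FourthMoments

variable {Ω ι : Type*} [MeasurableSpace Ω] {μ : Measure Ω}

/-- A product of four functions in `L⁴` is integrable. -/
lemma integrable_mul_mul_mul_of_memLp_four {f₁ f₂ f₃ f₄ : Ω → ℝ} (h₁ : MemLp f₁ 4 μ)
    (h₂ : MemLp f₂ 4 μ) (h₃ : MemLp f₃ 4 μ) (h₄ : MemLp f₄ 4 μ) :
    Integrable (fun ω => f₁ ω * f₂ ω * f₃ ω * f₄ ω) μ := by
  have hpow {f : Ω → ℝ} (hf : MemLp f 4 μ) : Integrable (fun ω => ‖f ω‖ ^ 4) μ := by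
    simpa using hf.integrable_norm_pow (p := 4) (by norm_num)
  refine (((hpow h₁).add (hpow h₂)).add ((hpow h₃).add (hpow h₄))).mono'
    (((h₁.1.mul h₂.1).mul h₃.1).mul h₄.1) (Filter.Eventually.of_forall fun ω => ?_)
  simp only [norm_mul, Pi.add_apply]
  nlinarith [sq_nonneg (‖f₁ ω‖ * ‖f₂ ω‖ - ‖f₃ ω‖ * ‖f₄ ω‖), sq_nonneg (‖f₁ ω‖ ^ 2 - ‖f₂ ω‖ ^ 2),
    sq_nonneg (‖f₃ ω‖ ^ 2 - ‖f₄ ω‖ ^ 2), pow_nonneg (norm_nonneg (f₁ ω)) 4,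
    pow_nonneg (norm_nonneg (f₂ ω)) 4, pow_nonneg (norm_nonneg (f₃ ω)) 4,
    pow_nonneg (norm_nonneg (f₄ ω)) 4]

variable {X : ι → Ω → ℝ}

/-- If one factor is centred and its index differs from the others, the mixed moment vanishes. -/
lemma ProbabilityTheory.iIndepFun.integral_mul_mul_mul_eq_zero (hX : iIndepFun X μ)
    (hmeas : ∀ i, Measurable (X i)) {a b c d : ι} (hd : ∫ ω, X d ω ∂μ = 0)
    (ha : a ≠ d) (hb : b ≠ d) (hc : c ≠ d) :
    ∫ ω, X a ω * X b ω * X c ω * X d ω ∂μ = 0 := by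
  classical
  have hdisj : Disjoint ({a, b, c} : Finset ι) {d} := by
    simp [ha.symm, hb.symm, hc.symm]
  have hind := hX.indepFun_finset {a, b, c} {d} hdisj hmeas
  have hψ : Measurable fun x : ({d} : Finset ι) → ℝ => x ⟨d, by simp⟩ := measurable_pi_apply _
  have hcomp := hind.comp
    (φ := fun x : ({a, b, c} : Finset ι) → ℝ =>
      x ⟨a, by simp⟩ * x ⟨b, by simp⟩ * x ⟨c, by simp⟩)
    (ψ := fun x : ({d} : Finset ι) → ℝ => x ⟨d, by simp⟩) (by fun_prop) hψ
  have hmul := hcomp.integral_fun_mul_eq_mul_integral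
    (((hmeas a).mul (hmeas b)).mul (hmeas c)).aestronglyMeasurable
    (hmeas d).aestronglyMeasurable
  simpa [Function.comp_def, hd] using hmul

/-- Fourth-order mixed moments of an independent centred family. -/
lemma ProbabilityTheory.iIndepFun.integral_mul_mul_mul [DecidableEq ι] (hX : iIndepFun X μ)
    (hmeas : ∀ i, Measurable (X i)) (hmean : ∀ i, ∫ ω, X i ω ∂μ = 0) {m₂ m₄ : ι → ℝ}
    (h₂ : ∀ i, ∫ ω, X i ω ^ 2 ∂μ = m₂ i) (h₄ : ∀ i, ∫ ω, X i ω ^ 4 ∂μ = m₄ i) (a b c d : ι) :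
    ∫ ω, X a ω * X b ω * X c ω * X d ω ∂μ
      = (if a = b then m₂ a else 0) * (if c = d then m₂ c else 0)
        + (if a = c then m₂ a else 0) * (if b = d then m₂ b else 0)
        + (if b = c then m₂ b else 0) * (if a = d then m₂ a else 0)
        + (if a = b ∧ b = c ∧ c = d then m₄ a - 3 * m₂ a ^ 2 else 0) := by
  have hpair {i k : ι} (hik : i ≠ k) : ∫ ω, X i ω ^ 2 * X k ω ^ 2 ∂μ = m₂ i * m₂ k := by
    have hcomp := (hX.indepFun hik).comp (φ := (· ^ 2)) (ψ := (· ^ 2))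
      (by fun_prop) (by fun_prop)
    have hmul := hcomp.integral_fun_mul_eq_mul_integral
      ((hmeas i).pow_const 2).aestronglyMeasurable ((hmeas k).pow_const 2).aestronglyMeasurable
    simpa [Function.comp_def, h₂] using hmul
  have hzero {i j k l : ι} (hi : i ≠ l) (hj : j ≠ l) (hk : k ≠ l) :
      ∫ ω, X i ω * X j ω * X k ω * X l ω ∂μ = 0 :=
    hX.integral_mul_mul_mul_eq_zero hmeas (hmean l) hi hj hk
  by_cases hda : a = d
  · subst hda
    by_cases hbc : b = c
    · subst hbc
      by_cases hab : a = b
      · subst hab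
        have h := h₄ a
        simp only [pow_succ, pow_zero, one_mul] at h
        simp only [h, and_self, if_true]
        ring
      · have h := hpair hab
        rw [show (fun ω => X a ω * X b ω * X b ω * X a ω) = fun ω => X a ω ^ 2 * X b ω ^ 2 by
          ext; ring, h]
        simp [hab, mul_comm]
    · by_cases hab : a = b
      · subst hab
        rw [show (fun ω => X a ω * X a ω * X c ω * X a ω)
          = fun ω => X a ω * X a ω * X a ω * X c ω by ext; ring, hzero hbc hbc hbc]
        simp [hbc, Ne.symm hbc]
      · rw [show (fun ω => X a ω * X b ω * X c ω * X a ω)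
          = fun ω => X a ω * X a ω * X c ω * X b ω by ext; ring, hzero hab hab (Ne.symm hbc)]
        simp [hab, Ne.symm hab, hbc]
  · by_cases hdb : b = d
    · subst hdb
      by_cases hac : a = c
      · subst hac
        rw [show (fun ω => X a ω * X b ω * X a ω * X b ω) = fun ω => X a ω ^ 2 * X b ω ^ 2 by
          ext; ring, hpair hda]
        simp [hda]
      · rw [show (fun ω => X a ω * X b ω * X c ω * X b ω)
          = fun ω => X b ω * X b ω * X c ω * X a ω by ext; ring,
          hzero (Ne.symm hda) (Ne.symm hda) (Ne.symm hac)]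
        simp [hda, hac]
    · by_cases hdc : c = d
      · subst hdc
        by_cases hab : a = b
        · subst hab
          rw [show (fun ω => X a ω * X a ω * X c ω * X c ω) = fun ω => X a ω ^ 2 * X c ω ^ 2 by
            ext; ring, hpair hda]
          simp [hda]
        · rw [show (fun ω => X a ω * X b ω * X c ω * X c ω)
            = fun ω => X c ω * X c ω * X b ω * X a ω by ext; ring,
            hzero (Ne.symm hda) (Ne.symm hda) (Ne.symm hab)]
          simp [hab, hda]
      · rw [hzero hda hdb hdc]
        simp [hda, hdb, hdc]

/-- Moment of a product of three pairwise sums against a linear combination of the family. -/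
lemma integral_add_mul_add_mul_add_mul_sum [Fintype ι] (h4 : ∀ i, MemLp (X i) 4 μ)
    (o j k l : ι) (c : ι → ℝ) :
    ∫ ω, (X o ω + X j ω) * (X o ω + X k ω) * (X o ω + X l ω) * ∑ i, c i * X i ω ∂μ
      = ∑ i, c i * (((∫ ω, X o ω * X o ω * X o ω * X i ω ∂μ)
          + (∫ ω, X o ω * X o ω * X l ω * X i ω ∂μ))
          + ((∫ ω, X o ω * X k ω * X o ω * X i ω ∂μ)
          + (∫ ω, X o ω * X k ω * X l ω * X i ω ∂μ))
          + (((∫ ω, X j ω * X o ω * X o ω * X i ω ∂μ)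
          + (∫ ω, X j ω * X o ω * X l ω * X i ω ∂μ))
          + ((∫ ω, X j ω * X k ω * X o ω * X i ω ∂μ)
          + (∫ ω, X j ω * X k ω * X l ω * X i ω ∂μ)))) := by
  have hint (a b d e : ι) : Integrable (fun ω => X a ω * X b ω * X d ω * X e ω) μ :=
    integrable_mul_mul_mul_of_memLp_four (h4 a) (h4 b) (h4 d) (h4 e)
  have hint₂ (a b d e a₂ b₂ d₂ e₂ : ι) : Integrable
      (fun ω => X a ω * X b ω * X d ω * X e ω + X a₂ ω * X b₂ ω * X d₂ ω * X e₂ ω) μ :=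
    (hint a b d e).add (hint a₂ b₂ d₂ e₂)
  have hadd (a b : ι) : MemLp (fun ω => X a ω + X b ω) 4 μ := (h4 a).add (h4 b)
  simp_rw [Finset.mul_sum]
  rw [integral_finsetSum _ fun i _ => integrable_mul_mul_mul_of_memLp_four
    (hadd o j) (hadd o k) (hadd o l) ((h4 i).const_mul (c i))]
  refine Finset.sum_congr rfl fun i _ => ?_
  simp_rw [← integral_add (hint _ _ _ _) (hint _ _ _ _)]
  rw [← integral_add (hint₂ _ _ _ _ _ _ _ _) (hint₂ _ _ _ _ _ _ _ _),
    ← integral_add (hint₂ _ _ _ _ _ _ _ _) (hint₂ _ _ _ _ _ _ _ _),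
    ← integral_add ((hint₂ _ _ _ _ _ _ _ _).fun_add (hint₂ _ _ _ _ _ _ _ _))
      ((hint₂ _ _ _ _ _ _ _ _).fun_add (hint₂ _ _ _ _ _ _ _ _)),
    ← integral_const_mul]
  refine integral_congr_ae (Filter.Eventually.of_forall fun ω => ?_)
  ring

end FourthMoments

/-- In the one-cluster model with finite fourth moments,
`E[(v+ε_j)(v+ε_k)(v+ε_ℓ) w] = τ² η⁻¹ [τ²(3−κ_v) + κ_ε σ_j² 1{j=k=ℓ}
+ σ_j²(1{j=k, j≠ℓ} − 1{j=k}) + σ_j²(1{j=ℓ, j≠k} − 1{j=ℓ}) + σ_k²(1{k=ℓ, k≠j} − 1{k=ℓ})]`,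
where `w = (∑ λ_h − 1) v + ∑ λ_h ε_h`. -/
theorem stmt_10 {Ω : Type*} [MeasurableSpace Ω] (μ : Measure Ω) [IsProbabilityMeasure μ]
    (n : ℕ) (hn : 1 ≤ n) (v : Ω → ℝ) (ε : Fin n → Ω → ℝ)
    (hv : Measurable v) (hε : ∀ j, Measurable (ε j))
    (hindep : iIndepFun (m := fun _ : Option (Fin n) => (inferInstance : MeasurableSpace ℝ))
      (fun i => Option.elim i v ε) μ)
    (τsq : ℝ) (hτ : 0 ≤ τsq) (s : Fin n → ℝ) (hs : ∀ j, 0 < s j)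
    (hv4 : MemLp v 4 μ) (hε4 : ∀ j, MemLp (ε j) 4 μ)
    (hEv : ∫ ω, v ω ∂μ = 0) (hEvsq : ∫ ω, (v ω) ^ 2 ∂μ = τsq)
    (hEε : ∀ j, ∫ ω, ε j ω ∂μ = 0) (hEεsq : ∀ j, ∫ ω, (ε j ω) ^ 2 ∂μ = s j)
    (hEv3 : ∫ ω, (v ω) ^ 3 ∂μ = 0) (hEε3 : ∀ j, ∫ ω, (ε j ω) ^ 3 ∂μ = 0)
    (κv κε : ℝ) (hEv4 : ∫ ω, (v ω) ^ 4 ∂μ = κv * τsq ^ 2)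
    (hEε4 : ∀ j, ∫ ω, (ε j ω) ^ 4 ∂μ = κε * (s j) ^ 2)
    (η : ℝ) (hη : η = 1 + τsq * ∑ h, (s h)⁻¹)
    (lam : Fin n → ℝ) (hlam : ∀ j, lam j = τsq * (s j)⁻¹ * η⁻¹)
    (w : Ω → ℝ) (hw : ∀ ω, w ω = (∑ h, lam h - 1) * v ω + ∑ h, lam h * ε h ω) :
    ∀ j k l, ∫ ω, (v ω + ε j ω) * (v ω + ε k ω) * (v ω + ε l ω) * w ω ∂μ
      = τsq * η⁻¹ * (τsq * (3 - κv)
          + κε * s j * (if j = k ∧ k = l then 1 else 0)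
          + s j * ((if j = k ∧ j ≠ l then 1 else 0) - (if j = k then 1 else 0))
          + s j * ((if j = l ∧ j ≠ k then 1 else 0) - (if j = l then 1 else 0))
          + s k * ((if k = l ∧ k ≠ j then 1 else 0) - (if k = l then 1 else 0))) := by
  intro j k l
  set X : Option (Fin n) → Ω → ℝ := fun i => Option.elim i v ε with hX
  have hmeas : ∀ i, Measurable (X i) := by rintro (_ | i) <;> simp [hX, hv, hε]
  have h4 : ∀ i, MemLp (X i) 4 μ := by rintro (_ | i) <;> simp [hX, hv4, hε4]
  have hmean : ∀ i, ∫ ω, X i ω ∂μ = 0 := by rintro (_ | i) <;> simp [hX, hEv, hEε]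
  have hm₂ : ∀ i, ∫ ω, X i ω ^ 2 ∂μ = Option.elim i τsq s := by
    rintro (_ | i) <;> simp [hX, hEvsq, hEεsq]
  have hm₄ : ∀ i, ∫ ω, X i ω ^ 4 ∂μ
      = Option.elim i (κv * τsq ^ 2) fun h => κε * s h ^ 2 := by
    rintro (_ | i) <;> simp [hX, hEv4, hEε4]
  have hw_sum : ∀ ω, w ω = ∑ i, Option.elim i (∑ h, lam h - 1) lam * X i ω := by
    intro ω
    simp [hw, hX, Fintype.sum_option]
  have hexpand := integral_add_mul_add_mul_add_mul_sum h4 none (some j) (some k) (some l)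
    fun i => Option.elim i (∑ h, lam h - 1) lam
  simp_rw [← hw_sum, hindep.integral_mul_mul_mul hmeas hmean hm₂ hm₄] at hexpand
  have hη_pos : 0 < η := by
    have : 0 ≤ ∑ h, (s h)⁻¹ := Finset.sum_nonneg fun h _ => (inv_pos.2 (hs h)).le
    rw [hη]
    positivity
  have hlam_sum : ∑ h, lam h - 1 = -η⁻¹ := by
    simp_rw [hlam, ← Finset.sum_mul, ← Finset.mul_sum]
    rw [show τsq * ∑ h, (s h)⁻¹ = η - 1 by rw [hη]; ring]
    field_simp
    ring
  have hlam_mul (h : Fin n) : lam h * s h = τsq * η⁻¹ := by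
    have := (hs h).ne'
    rw [hlam]
    field_simp
  refine hexpand.trans ?_
  rw [Fintype.sum_option]
  simp only [Option.elim, hlam_sum, Option.some.injEq, reduceCtorEq, if_true, if_false,
    false_and, and_false, and_self, mul_zero, zero_mul, add_zero, zero_add, mul_add,
    Finset.sum_add_distrib]
  by_cases hjk : j = k
  · subst hjk
    by_cases hjl : j = l
    · subst hjl
      simp
      linear_combination (3 * τsq + κε * s j) * hlam_mul j
    · simp [hjl]
      linear_combination 2 * τsq * hlam_mul j + (τsq + s j) * hlam_mul l
  · by_cases hkl : k = l
    · subst hkl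
      simp [hjk, Ne.symm hjk]
      linear_combination 2 * τsq * hlam_mul k + (τsq + s k) * hlam_mul j
    · by_cases hjl : j = l
      · subst hjl
        simp [hjk, hkl]
        linear_combination 2 * τsq * hlam_mul j + (τsq + s j) * hlam_mul k
      · simp [hjk, hkl, hjl]
        linear_combination τsq * (hlam_mul j + hlam_mul k + hlam_mul l)
end

section
/- Under the one-cluster model with finite fourth moments, for all j, k ∈ {1, …, n}: Σ_{ℓ=1}^n E[(v + ε_j)(v + ε_k)(v + ε_ℓ) w] = τ² η^{-1} [ n τ² (3 − κ_v) + σ_j² (κ_ε − 3) · 1{j = k} ], where w = (Σ_{h=1}^n λ_h − 1) v + Σ_{h=1}^n λ_h ε_h. -/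
open MeasureTheory ProbabilityTheory

section FourthMoments

variable {Ω ι : Type*} [MeasurableSpace Ω] {μ : Measure Ω} {X : ι → Ω → ℝ}

/-- A product of four `L⁴` functions is integrable. -/
lemma integrable_mul_four_of_memLp {f g h k : Ω → ℝ} (hf : MemLp f 4 μ) (hg : MemLp g 4 μ)
    (hh : MemLp h 4 μ) (hk : MemLp k 4 μ) :
    Integrable (fun ω => f ω * g ω * h ω * k ω) μ := by
  have : ENNReal.HolderTriple 4 4 2 := ⟨by
    rw [← two_mul, show (4 : ENNReal) = 2 * 2 by norm_num,
      ENNReal.mul_inv (by simp) (by simp), ← mul_assoc,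
      ENNReal.mul_inv_cancel (by simp) (by simp), one_mul]⟩
  have h1 : MemLp (fun ω => f ω * g ω) 2 μ := hg.mul' hf
  have h2 : MemLp (fun ω => h ω * k ω) 2 μ := hk.mul' hh
  simpa only [Pi.mul_def, ← mul_assoc] using h1.integrable_mul h2

/-- For an independent family, a centred factor whose index differs from the other three makes the
mixed fourth moment vanish. -/
lemma integral_mul_three_eq_zero_of_iIndepFun [DecidableEq ι]
    (hX : ∀ i, Measurable (X i)) (hindep : iIndepFun X μ) {a b c d : ι}
    (h0 : ∫ ω, X a ω ∂μ = 0) (hab : a ≠ b) (hac : a ≠ c) (had : a ≠ d) :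
    ∫ ω, X a ω * (X b ω * X c ω * X d ω) ∂μ = 0 := by
  have hdisj : Disjoint ({a} : Finset ι) {b, c, d} := by simp [hab, hac, had]
  have hfin := hindep.indepFun_finset _ _ hdisj hX
  have hcomp : IndepFun (X a) (fun ω => X b ω * X c ω * X d ω) μ := hfin.comp
    (φ := fun x : ({a} : Finset ι) → ℝ => x ⟨a, by simp⟩)
    (ψ := fun x : ({b, c, d} : Finset ι) → ℝ =>
      x ⟨b, by simp⟩ * x ⟨c, by simp⟩ * x ⟨d, by simp⟩)
    (by fun_prop) (by fun_prop)
  rw [hcomp.integral_fun_mul_eq_mul_integral (hX a).aestronglyMeasurable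
    (((hX b).mul (hX c)).mul (hX d)).aestronglyMeasurable, h0, zero_mul]

/-- Mixed second moments of squares of an independent pair factorize. -/
lemma integral_sq_mul_sq_of_iIndepFun (hX : ∀ i, Measurable (X i)) (hindep : iIndepFun X μ)
    {a b : ι} (hab : a ≠ b) :
    ∫ ω, X a ω ^ 2 * X b ω ^ 2 ∂μ = (∫ ω, X a ω ^ 2 ∂μ) * ∫ ω, X b ω ^ 2 ∂μ :=
  ((hindep.indepFun hab).comp (φ := fun x => x ^ 2) (ψ := fun x => x ^ 2)
    (by fun_prop) (by fun_prop)).integral_fun_mul_eq_mul_integral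
    ((hX a).pow_const 2).aestronglyMeasurable ((hX b).pow_const 2).aestronglyMeasurable

/-- Mixed fourth moments of an independent centred family. -/
lemma integral_mul_four_of_iIndepFun [DecidableEq ι]
    (hX : ∀ i, Measurable (X i)) (hindep : iIndepFun X μ)
    (h0 : ∀ i, ∫ ω, X i ω ∂μ = 0) {m₂ m₄ : ι → ℝ} (h2 : ∀ i, ∫ ω, X i ω ^ 2 ∂μ = m₂ i)
    (h4 : ∀ i, ∫ ω, X i ω ^ 4 ∂μ = m₄ i) (a b c d : ι) :
    ∫ ω, X a ω * X b ω * X c ω * X d ω ∂μ =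
      (if a = b then m₂ a else 0) * (if c = d then m₂ c else 0)
      + (if a = c then m₂ a else 0) * (if b = d then m₂ b else 0)
      + (if b = c then m₂ b else 0) * (if a = d then m₂ a else 0)
      + if a = b then if a = c then if a = d then m₄ a - 3 * m₂ a ^ 2 else 0 else 0 else 0 := by
  have hpair : ∀ {x y : ι}, x ≠ y → ∫ ω, X x ω ^ 2 * X y ω ^ 2 ∂μ = m₂ x * m₂ y := fun hxy => by
    rw [integral_sq_mul_sq_of_iIndepFun hX hindep hxy, h2, h2]
  have hzero : ∀ {x y z t : ι}, x ≠ y → x ≠ z → x ≠ t →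
      ∫ ω, X x ω * (X y ω * X z ω * X t ω) ∂μ = 0 := fun hy hz ht =>
    integral_mul_three_eq_zero_of_iIndepFun hX hindep (h0 _) hy hz ht
  by_cases ha : a ≠ b ∧ a ≠ c ∧ a ≠ d
  · obtain ⟨hb, hc, hd⟩ := ha
    simpa [hb, hc, hd, mul_assoc] using hzero hb hc hd
  by_cases hb : b ≠ a ∧ b ≠ c ∧ b ≠ d
  · obtain ⟨ha, hc, hd⟩ := hb
    simpa [ha.symm, hc, hd, mul_assoc, mul_left_comm] using hzero ha hc hd
  by_cases hc : c ≠ a ∧ c ≠ b ∧ c ≠ d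
  · obtain ⟨ha, hb, hd⟩ := hc
    simpa [ha.symm, hb.symm, hd, mul_assoc, mul_left_comm] using hzero ha hb hd
  by_cases hd : d ≠ a ∧ d ≠ b ∧ d ≠ c
  · obtain ⟨ha, hb, hc⟩ := hd
    simpa [ha.symm, hb.symm, hc.symm, mul_comm (X d _)] using hzero ha hb hc
  by_cases hab : a = b
  · subst hab
    have hcd : c = d := by grind
    subst hcd
    by_cases hac : a = c
    · subst hac
      simp only [if_true, ← h4]
      ring_nf
    · simp only [hac, if_true, if_false, ← hpair hac]
      ring_nf
  by_cases hac : a = c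
  · subst hac
    have hbd : b = d := by grind
    subst hbd
    simp only [hab, Ne.symm hab, if_true, if_false, mul_zero, zero_add, add_zero, ← hpair hab]
    congr 1; ext ω; ring
  have had : a = d := by grind
  have hbc : b = c := by grind
  subst had hbc
  simp only [hab, if_true, if_false, zero_mul, zero_add, add_zero, ← hpair (Ne.symm hab)]
  congr 1; ext ω; ring

/-- Mixed fourth moments of linear combinations of an independent centred family: the three
pairings of covariances plus the fourth cumulant. -/
lemma integral_linearCombination_mul_four_of_iIndepFun [Fintype ι]
    (hX : ∀ i, Measurable (X i)) (hindep : iIndepFun X μ) (hX4 : ∀ i, MemLp (X i) 4 μ)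
    (h0 : ∀ i, ∫ ω, X i ω ∂μ = 0) {m₂ m₄ : ι → ℝ} (h2 : ∀ i, ∫ ω, X i ω ^ 2 ∂μ = m₂ i)
    (h4 : ∀ i, ∫ ω, X i ω ^ 4 ∂μ = m₄ i) (α β γ δ : ι → ℝ) :
    ∫ ω, (∑ i, α i * X i ω) * (∑ i, β i * X i ω) * (∑ i, γ i * X i ω) * (∑ i, δ i * X i ω) ∂μ =
      (∑ i, α i * β i * m₂ i) * (∑ i, γ i * δ i * m₂ i)
      + (∑ i, α i * γ i * m₂ i) * (∑ i, β i * δ i * m₂ i)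
      + (∑ i, β i * γ i * m₂ i) * (∑ i, α i * δ i * m₂ i)
      + ∑ i, α i * β i * γ i * δ i * (m₄ i - 3 * m₂ i ^ 2) := by
  classical
  have hint : ∀ a b c d, Integrable
      (fun ω => α a * β b * γ c * δ d * (X a ω * X b ω * X c ω * X d ω)) μ := fun a b c d =>
    (integrable_mul_four_of_memLp (hX4 a) (hX4 b) (hX4 c) (hX4 d)).const_mul _
  have hexp : ∀ ω, (∑ i, α i * X i ω) * (∑ i, β i * X i ω) * (∑ i, γ i * X i ω)
      * (∑ i, δ i * X i ω) =
      ∑ a, ∑ b, ∑ c, ∑ d, α a * β b * γ c * δ d * (X a ω * X b ω * X c ω * X d ω) := fun ω => by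
    rw [mul_assoc, mul_assoc, Finset.sum_mul]
    refine Finset.sum_congr rfl fun a _ => ?_
    rw [Finset.sum_mul, Finset.mul_sum]
    refine Finset.sum_congr rfl fun b _ => ?_
    rw [Finset.sum_mul_sum, Finset.mul_sum, Finset.mul_sum]
    refine Finset.sum_congr rfl fun c _ => ?_
    rw [Finset.mul_sum, Finset.mul_sum]
    exact Finset.sum_congr rfl fun d _ => by ring
  have hsum : ∫ ω, (∑ i, α i * X i ω) * (∑ i, β i * X i ω) * (∑ i, γ i * X i ω)
      * (∑ i, δ i * X i ω) ∂μ = ∑ a, ∑ b, ∑ c, ∑ d, α a * β b * γ c * δ d *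
        ∫ ω, X a ω * X b ω * X c ω * X d ω ∂μ := by
    simp only [hexp]
    rw [integral_finsetSum _ fun a _ => integrable_finsetSum _ fun b _ =>
      integrable_finsetSum _ fun c _ => integrable_finsetSum _ fun d _ => hint a b c d]
    refine Finset.sum_congr rfl fun a _ => ?_
    rw [integral_finsetSum _ fun b _ =>
      integrable_finsetSum _ fun c _ => integrable_finsetSum _ fun d _ => hint a b c d]
    refine Finset.sum_congr rfl fun b _ => ?_
    rw [integral_finsetSum _ fun c _ => integrable_finsetSum _ fun d _ => hint a b c d]
    refine Finset.sum_congr rfl fun c _ => ?_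
    rw [integral_finsetSum _ fun d _ => hint a b c d]
    exact Finset.sum_congr rfl fun d _ => integral_const_mul _ _
  rw [hsum]
  simp only [integral_mul_four_of_iIndepFun hX hindep h0 h2 h4, mul_add, Finset.sum_add_distrib]
  congr 1
  · congr 1
    · congr 1
      · simp [Finset.sum_mul_sum, mul_ite, ite_mul]
        refine Finset.sum_congr rfl fun a _ => Finset.sum_congr rfl fun b _ => by ring
      · simp [Finset.sum_mul_sum, mul_ite, ite_mul]
        refine Finset.sum_congr rfl fun a _ => Finset.sum_congr rfl fun b _ => by ring
    · simp [Finset.sum_mul_sum, mul_ite, ite_mul]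
      rw [Finset.sum_comm]
      refine Finset.sum_congr rfl fun a _ => Finset.sum_congr rfl fun b _ => by ring
  · simp [mul_ite]

end FourthMoments

/-- In the one-cluster model with finite fourth moments,
`∑_ℓ E[(v+ε_j)(v+ε_k)(v+ε_ℓ) w] = τ² η⁻¹ [n τ² (3 − κ_v) + σ_j² (κ_ε − 3) 1{j=k}]`,
where `w = (∑ λ_h − 1) v + ∑ λ_h ε_h`. -/
theorem stmt_11 {Ω : Type*} [MeasurableSpace Ω] (μ : Measure Ω) [IsProbabilityMeasure μ]
    (n : ℕ) (hn : 1 ≤ n) (v : Ω → ℝ) (ε : Fin n → Ω → ℝ)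
    (hv : Measurable v) (hε : ∀ j, Measurable (ε j))
    (hindep : iIndepFun (m := fun _ : Option (Fin n) => (inferInstance : MeasurableSpace ℝ))
      (fun i => Option.elim i v ε) μ)
    (τsq : ℝ) (hτ : 0 ≤ τsq) (s : Fin n → ℝ) (hs : ∀ j, 0 < s j)
    (hv4 : MemLp v 4 μ) (hε4 : ∀ j, MemLp (ε j) 4 μ)
    (hEv : ∫ ω, v ω ∂μ = 0) (hEvsq : ∫ ω, (v ω) ^ 2 ∂μ = τsq)
    (hEε : ∀ j, ∫ ω, ε j ω ∂μ = 0) (hEεsq : ∀ j, ∫ ω, (ε j ω) ^ 2 ∂μ = s j)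
    (hEv3 : ∫ ω, (v ω) ^ 3 ∂μ = 0) (hEε3 : ∀ j, ∫ ω, (ε j ω) ^ 3 ∂μ = 0)
    (κv κε : ℝ) (hEv4 : ∫ ω, (v ω) ^ 4 ∂μ = κv * τsq ^ 2)
    (hEε4 : ∀ j, ∫ ω, (ε j ω) ^ 4 ∂μ = κε * (s j) ^ 2)
    (η : ℝ) (hη : η = 1 + τsq * ∑ h, (s h)⁻¹)
    (lam : Fin n → ℝ) (hlam : ∀ j, lam j = τsq * (s j)⁻¹ * η⁻¹)
    (w : Ω → ℝ) (hw : ∀ ω, w ω = (∑ h, lam h - 1) * v ω + ∑ h, lam h * ε h ω) :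
    ∀ j k, ∑ l, ∫ ω, (v ω + ε j ω) * (v ω + ε k ω) * (v ω + ε l ω) * w ω ∂μ
      = τsq * η⁻¹ * ((n : ℝ) * τsq * (3 - κv)
          + s j * (κε - 3) * (if j = k then 1 else 0)) := by
  intro j k
  have hη0 : η ≠ 0 := by
    have : 0 ≤ ∑ h, (s h)⁻¹ := Finset.sum_nonneg fun h _ => (inv_pos.2 (hs h)).le
    rw [hη]
    positivity
  have hΛ : ∑ h, lam h - 1 = -η⁻¹ := by
    simp only [hlam]
    rw [← Finset.sum_mul, ← Finset.mul_sum, eq_sub_iff_add_eq'.2 hη.symm]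
    field_simp
    ring
  have hlams : ∀ l, lam l * s l = τsq * η⁻¹ := fun l => by
    have := (hs l).ne'
    rw [hlam]
    field_simp
  have hterm : ∀ l, ∫ ω, (v ω + ε j ω) * (v ω + ε k ω) * (v ω + ε l ω) * w ω ∂μ =
      τsq * η⁻¹ * (τsq * (3 - κv)
        + if l = j then s j * (κε - 3) * (if j = k then 1 else 0) else 0) := fun l => by
    have key := integral_linearCombination_mul_four_of_iIndepFun (μ := μ)
      (X := fun i : Option (Fin n) => Option.elim i v ε)
      (m₂ := fun i => i.elim τsq s)
      (m₄ := fun i => i.elim (κv * τsq ^ 2) fun j => κε * s j ^ 2)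
      (by rintro (_ | i); exacts [hv, hε i]) hindep
      (by rintro (_ | i); exacts [hv4, hε4 i])
      (by rintro (_ | i); exacts [hEv, hEε i])
      (by rintro (_ | i); exacts [hEvsq, hEεsq i])
      (by rintro (_ | i); exacts [hEv4, hEε4 i])
      (fun i => i.elim 1 fun h => if h = j then 1 else 0)
      (fun i => i.elim 1 fun h => if h = k then 1 else 0)
      (fun i => i.elim 1 fun h => if h = l then 1 else 0)
      (fun i => i.elim (∑ h, lam h - 1) lam)
    simp only [Fintype.sum_option, Option.elim, one_mul, ite_mul, zero_mul,
      Finset.sum_ite_eq', Finset.mem_univ, if_true, hlams, hΛ] at key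
    simp only [hw, hΛ]
    rw [key]
    have hl4 : lam j * s j ^ 2 = τsq * η⁻¹ * s j := by rw [← hlams j]; ring
    by_cases hjk : j = k
    · subst hjk
      by_cases hlj : l = j
      · subst hlj
        simp only [if_true]
        linear_combination (κε - 3) * hl4
      · simp only [hlj, Ne.symm hlj, if_true, if_false]
        ring
    · simp only [hjk, if_false]
      split_ifs <;> ring
  simp only [hterm]
  rw [← Finset.mul_sum, Finset.sum_add_distrib, Finset.sum_const, Finset.sum_ite_eq',
    if_pos (Finset.mem_univ j), Finset.card_univ, Fintype.card_fin, nsmul_eq_mul, mul_assoc (n : ℝ)]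
end

section
/- Under the one-cluster model with finite fourth moments, for every j ∈ {1, …, n}: E[ ( Σ_{h=1}^n { (v + ε_h)² − σ_h² − τ² } ) (v + ε_j) w ] = τ² η^{-1} { n τ² (3 − κ_v) + σ_j² (κ_ε − 3) }, where w = (Σ_{h=1}^n λ_h − 1) v + Σ_{h=1}^n λ_h ε_h. (Up to the scale factor m/N, the first factor in the expectation is the statistic u_{1i} used in estimating τ², so this is the identity M_{1ij}(φ, κ) = (m/N) τ² η_i^{-1}{ n_i τ² (3 − κ_v) + σ_{ij}² (κ_ε − 3) }.) -/
open MeasureTheory ProbabilityTheory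

section Moments

variable {Ω ι : Type*} [MeasurableSpace Ω] {μ : Measure Ω}

/-- The product of two `L⁴` functions is in `L²`. -/
lemma memLp_two_mul_of_memLp_four {f g : Ω → ℝ} (hf : MemLp f 4 μ) (hg : MemLp g 4 μ) :
    MemLp (fun ω => f ω * g ω) 2 μ := by
  have : ENNReal.HolderTriple 4 4 2 := ⟨by
    rw [← two_mul, show (4 : ENNReal) = 2 * 2 by norm_num,
      ENNReal.mul_inv (by simp) (by simp), ← mul_assoc,
      ENNReal.mul_inv_cancel (by simp) (by simp), one_mul]⟩
  exact hg.mul hf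

lemma integrable_mul_four_of_memLp_four {f g h k : Ω → ℝ} (hf : MemLp f 4 μ) (hg : MemLp g 4 μ)
    (hh : MemLp h 4 μ) (hk : MemLp k 4 μ) :
    Integrable (fun ω => f ω * g ω * (h ω * k ω)) μ :=
  (memLp_two_mul_of_memLp_four hf hg).integrable_mul (memLp_two_mul_of_memLp_four hh hk)

lemma integrable_mul_of_memLp_four [IsFiniteMeasure μ] {f g : Ω → ℝ} (hf : MemLp f 4 μ)
    (hg : MemLp g 4 μ) : Integrable (fun ω => f ω * g ω) μ :=
  (memLp_two_mul_of_memLp_four hf hg).integrable (by norm_num)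

lemma memLp_linearForm [Fintype ι] {p : ENNReal} {X : ι → Ω → ℝ} (hX : ∀ i, MemLp (X i) p μ)
    (A : ι → ℝ) : MemLp (fun ω => ∑ i, A i * X i ω) p μ :=
  memLp_finsetSum _ fun i _ => (hX i).const_mul (A i)

/-- A mixed fourth moment of independent variables vanishes when a centred factor occurs once. -/
lemma integral_mul_four_eq_zero_of_ne [DecidableEq ι] {X : ι → Ω → ℝ} (hX : ∀ i, Measurable (X i))
    (hind : iIndepFun X μ) (h1 : ∀ i, ∫ ω, X i ω ∂μ = 0) {a b c d : ι}
    (hb : a ≠ b) (hc : a ≠ c) (hd : a ≠ d) :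
    ∫ ω, X a ω * X b ω * (X c ω * X d ω) ∂μ = 0 := by
  have hdisj : Disjoint ({a} : Finset ι) {b, c, d} := by simp [hb, hc, hd]
  have hab : IndepFun (X a) (fun ω => X b ω * (X c ω * X d ω)) μ :=
    (hind.indepFun_finset _ _ hdisj hX).comp
      (φ := fun x : ({a} : Finset ι) → ℝ => x ⟨a, by simp⟩)
      (ψ := fun x : ({b, c, d} : Finset ι) → ℝ =>
        x ⟨b, by simp⟩ * (x ⟨c, by simp⟩ * x ⟨d, by simp⟩))
      (by fun_prop) (by fun_prop)
  have key := hab.integral_fun_mul_eq_mul_integral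
    (hX a).aestronglyMeasurable
    ((hX b).mul ((hX c).mul (hX d))).aestronglyMeasurable
  rw [h1 a, zero_mul] at key
  simpa only [mul_assoc] using key

/-- The second-moment structure of independent centred variables. -/
lemma integral_mul_eq_ite [DecidableEq ι] {X : ι → Ω → ℝ} (hX : ∀ i, Measurable (X i))
    (hind : iIndepFun X μ) (h1 : ∀ i, ∫ ω, X i ω ∂μ = 0) (a b : ι) :
    ∫ ω, X a ω * X b ω ∂μ = if a = b then ∫ ω, X a ω ^ 2 ∂μ else 0 := by
  split_ifs with hab
  · subst hab
    simp only [sq]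
  · rw [(hind.indepFun hab).integral_fun_mul_eq_mul_integral (hX a).aestronglyMeasurable
      (hX b).aestronglyMeasurable, h1 a, zero_mul]

/-- The fourth-moment structure of independent centred variables: the Isserlis pairings plus the
excess on the diagonal. -/
lemma integral_mul_four_eq_ite [DecidableEq ι] {X : ι → Ω → ℝ} (hX : ∀ i, Measurable (X i))
    (hind : iIndepFun X μ) (h1 : ∀ i, ∫ ω, X i ω ∂μ = 0) {m q : ι → ℝ}
    (hm : ∀ i, ∫ ω, X i ω ^ 2 ∂μ = m i) (hq : ∀ i, ∫ ω, X i ω ^ 4 ∂μ = q i) (a b c d : ι) :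
    ∫ ω, X a ω * X b ω * (X c ω * X d ω) ∂μ
      = (if a = b then if c = d then m a * m c else 0 else 0)
        + (if a = c then if b = d then m a * m b else 0 else 0)
        + (if a = d then if b = c then m a * m b else 0 else 0)
        + (if a = b then if a = c then if a = d then q a - 3 * m a ^ 2 else 0 else 0 else 0) := by
  have hzero {a b c d : ι} (hb : a ≠ b) (hc : a ≠ c) (hd : a ≠ d) :=
    integral_mul_four_eq_zero_of_ne hX hind h1 hb hc hd
  have hpair {a c : ι} (hac : a ≠ c) :
      ∫ ω, X a ω * X a ω * (X c ω * X c ω) ∂μ = m a * m c := by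
    have hsq := (hind.indepFun hac).comp (φ := fun x : ℝ => x ^ 2) (ψ := fun x : ℝ => x ^ 2)
      (by fun_prop) (by fun_prop)
    rw [← hm a, ← hm c]
    simp only [← sq]
    exact hsq.integral_fun_mul_eq_mul_integral ((hX a).pow_const 2).aestronglyMeasurable
      ((hX c).pow_const 2).aestronglyMeasurable
  by_cases hab : a = b
  · subst hab
    by_cases hcd : c = d
    · subst hcd
      by_cases hac : a = c
      · subst hac
        have : ∀ ω, X a ω * X a ω * (X a ω * X a ω) = X a ω ^ 4 := fun ω => by ring
        simp only [this, hq, if_true]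
        ring
      · simp [hac, hpair hac]
    · by_cases hac : a = c
      · subst hac
        rw [show ∫ ω, X a ω * X a ω * (X a ω * X d ω) ∂μ
            = ∫ ω, X d ω * X a ω * (X a ω * X a ω) ∂μ from
          integral_congr_ae (.of_forall fun ω => by ring),
          hzero (Ne.symm hcd) (Ne.symm hcd) (Ne.symm hcd)]
        simp [hcd]
      · rw [show ∫ ω, X a ω * X a ω * (X c ω * X d ω) ∂μ
            = ∫ ω, X c ω * X a ω * (X d ω * X a ω) ∂μ from
          integral_congr_ae (.of_forall fun ω => by ring), hzero (Ne.symm hac) hcd (Ne.symm hac)]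
        simp [hac, hcd]
  · by_cases hac : a = c
    · subst hac
      by_cases hbd : b = d
      · subst hbd
        rw [show ∫ ω, X a ω * X b ω * (X a ω * X b ω) ∂μ
            = ∫ ω, X a ω * X a ω * (X b ω * X b ω) ∂μ from
          integral_congr_ae (.of_forall fun ω => by ring), hpair hab]
        simp [hab]
      · rw [show ∫ ω, X a ω * X b ω * (X a ω * X d ω) ∂μ
            = ∫ ω, X b ω * X a ω * (X a ω * X d ω) ∂μ from
          integral_congr_ae (.of_forall fun ω => by ring), hzero (Ne.symm hab) (Ne.symm hab) hbd]
        simp [hab, hbd, Ne.symm hab]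
    · by_cases had : a = d
      · subst had
        by_cases hbc : b = c
        · subst hbc
          rw [show ∫ ω, X a ω * X b ω * (X b ω * X a ω) ∂μ
              = ∫ ω, X a ω * X a ω * (X b ω * X b ω) ∂μ from
            integral_congr_ae (.of_forall fun ω => by ring), hpair hab]
          simp [hab]
        · rw [show ∫ ω, X a ω * X b ω * (X c ω * X a ω) ∂μ
              = ∫ ω, X b ω * X a ω * (X c ω * X a ω) ∂μ from
            integral_congr_ae (.of_forall fun ω => by ring), hzero (Ne.symm hab) hbc (Ne.symm hab)]
          simp [hab, hbc, hac]
      · rw [hzero hab hac had]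
        simp [hab, hac, had]

/-- The covariance of two linear forms in independent centred variables. -/
lemma integral_linearForm_mul [Fintype ι] [DecidableEq ι] [IsFiniteMeasure μ] {X : ι → Ω → ℝ}
    (hX : ∀ i, Measurable (X i)) (hX4 : ∀ i, MemLp (X i) 4 μ)
    (hind : iIndepFun X μ) (h1 : ∀ i, ∫ ω, X i ω ∂μ = 0) {m : ι → ℝ}
    (hm : ∀ i, ∫ ω, X i ω ^ 2 ∂μ = m i) (A B : ι → ℝ) :
    ∫ ω, (∑ i, A i * X i ω) * (∑ i, B i * X i ω) ∂μ = ∑ i, A i * B i * m i := by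
  have hexp : ∀ ω, (∑ i, A i * X i ω) * (∑ i, B i * X i ω)
      = ∑ a, ∑ b, A a * B b * (X a ω * X b ω) := fun ω => by
    rw [Finset.sum_mul_sum]
    exact Finset.sum_congr rfl fun a _ => Finset.sum_congr rfl fun b _ => by ring
  have hint (a b : ι) : Integrable (fun ω => A a * B b * (X a ω * X b ω)) μ :=
    (integrable_mul_of_memLp_four (hX4 a) (hX4 b)).const_mul _
  simp only [hexp]
  rw [integral_finsetSum _ fun a _ => integrable_finsetSum _ fun b _ => hint a b]
  refine Finset.sum_congr rfl fun a _ => ?_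
  rw [integral_finsetSum _ fun b _ => hint a b]
  simp [integral_const_mul, integral_mul_eq_ite hX hind h1, hm]

/-- The fourth mixed moment of linear forms in independent centred variables. -/
lemma integral_linearForm_mul_four [Fintype ι] [DecidableEq ι] {X : ι → Ω → ℝ}
    (hX : ∀ i, Measurable (X i)) (hX4 : ∀ i, MemLp (X i) 4 μ)
    (hind : iIndepFun X μ) (h1 : ∀ i, ∫ ω, X i ω ∂μ = 0) {m q : ι → ℝ}
    (hm : ∀ i, ∫ ω, X i ω ^ 2 ∂μ = m i) (hq : ∀ i, ∫ ω, X i ω ^ 4 ∂μ = q i)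
    (A B C D : ι → ℝ) :
    ∫ ω, (∑ i, A i * X i ω) * (∑ i, B i * X i ω)
        * ((∑ i, C i * X i ω) * (∑ i, D i * X i ω)) ∂μ
      = (∑ i, A i * B i * m i) * (∑ i, C i * D i * m i)
        + (∑ i, A i * C i * m i) * (∑ i, B i * D i * m i)
        + (∑ i, A i * D i * m i) * (∑ i, B i * C i * m i)
        + ∑ i, A i * B i * C i * D i * (q i - 3 * m i ^ 2) := by
  have hexp : ∀ ω, (∑ i, A i * X i ω) * (∑ i, B i * X i ω)
        * ((∑ i, C i * X i ω) * (∑ i, D i * X i ω))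
      = ∑ a, ∑ b, ∑ c, ∑ d, A a * B b * C c * D d * (X a ω * X b ω * (X c ω * X d ω)) := fun ω => by
    simp only [Finset.sum_mul_sum]
    refine Finset.sum_congr rfl fun a _ => ?_
    rw [Finset.sum_comm]
    exact Finset.sum_congr rfl fun b _ =>
      Finset.sum_congr rfl fun c _ => Finset.sum_congr rfl fun d _ => by ring
  have hint (a b c d : ι) :
      Integrable (fun ω => A a * B b * C c * D d * (X a ω * X b ω * (X c ω * X d ω))) μ :=
    (integrable_mul_four_of_memLp_four (hX4 a) (hX4 b) (hX4 c) (hX4 d)).const_mul _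
  simp only [hexp]
  rw [integral_finsetSum _ fun a _ => integrable_finsetSum _ fun b _ =>
    integrable_finsetSum _ fun c _ => integrable_finsetSum _ fun d _ => hint a b c d]
  simp only [Finset.sum_mul_sum, ← Finset.sum_add_distrib]
  refine Finset.sum_congr rfl fun a _ => ?_
  rw [integral_finsetSum _ fun b _ => integrable_finsetSum _ fun c _ =>
    integrable_finsetSum _ fun d _ => hint a b c d]
  have hinner (b : ι) :
      ∫ ω, ∑ c, ∑ d, A a * B b * C c * D d * (X a ω * X b ω * (X c ω * X d ω)) ∂μ
        = (if a = b then ∑ c, A a * B a * m a * (C c * D c * m c) else 0)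
          + A a * C a * m a * (B b * D b * m b)
          + A a * D a * m a * (B b * C b * m b)
          + (if a = b then A a * B a * C a * D a * (q a - 3 * m a ^ 2) else 0) := by
    rw [integral_finsetSum _ fun c _ => integrable_finsetSum _ fun d _ => hint a b c d]
    simp only [integral_finsetSum _ fun d _ => hint a b _ d, integral_const_mul,
      integral_mul_four_eq_ite hX hind h1 hm hq, mul_add, Finset.sum_add_distrib]
    refine congrArg₂ _ (congrArg₂ _ (congrArg₂ _ ?_ ?_) ?_) ?_
    · split_ifs with hab
      · subst hab
        simp only [mul_ite, mul_zero, Finset.sum_ite_eq, Finset.mem_univ, if_true]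
        exact Finset.sum_congr rfl fun c _ => by ring
      · simp
    · rw [Finset.sum_eq_single a (fun c _ hc => by simp [Ne.symm hc]) (by simp)]
      simp only [mul_ite, mul_zero, Finset.sum_ite_eq, Finset.mem_univ, if_true]
      ring
    · rw [Finset.sum_eq_single b (fun c _ hc => by simp [Ne.symm hc]) (by simp)]
      simp only [mul_ite, mul_zero, Finset.sum_ite_eq, Finset.mem_univ, if_true]
      ring
    · split_ifs with hab
      · subst hab
        rw [Finset.sum_eq_single a (fun c _ hc => by simp [Ne.symm hc]) (by simp)]
        simp only [mul_ite, mul_zero, Finset.sum_ite_eq, Finset.mem_univ, if_true]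
      · simp
  simp only [hinner, Finset.sum_add_distrib, Finset.sum_ite_eq, Finset.mem_univ, if_true]

end Moments

/-- In the one-cluster model with finite fourth moments,
`E[(∑_h {(v+ε_h)² − σ_h² − τ²}) (v+ε_j) w] = τ² η⁻¹ {n τ² (3 − κ_v) + σ_j² (κ_ε − 3)}`,
where `w = (∑ λ_h − 1) v + ∑ λ_h ε_h`. -/
theorem stmt_13 {Ω : Type*} [MeasurableSpace Ω] (μ : Measure Ω) [IsProbabilityMeasure μ]
    (n : ℕ) (hn : 1 ≤ n) (v : Ω → ℝ) (ε : Fin n → Ω → ℝ)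
    (hv : Measurable v) (hε : ∀ j, Measurable (ε j))
    (hindep : iIndepFun (m := fun _ : Option (Fin n) => (inferInstance : MeasurableSpace ℝ))
      (fun i => Option.elim i v ε) μ)
    (τsq : ℝ) (hτ : 0 ≤ τsq) (s : Fin n → ℝ) (hs : ∀ j, 0 < s j)
    (hv4 : MemLp v 4 μ) (hε4 : ∀ j, MemLp (ε j) 4 μ)
    (hEv : ∫ ω, v ω ∂μ = 0) (hEvsq : ∫ ω, (v ω) ^ 2 ∂μ = τsq)
    (hEε : ∀ j, ∫ ω, ε j ω ∂μ = 0) (hEεsq : ∀ j, ∫ ω, (ε j ω) ^ 2 ∂μ = s j)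
    (hEv3 : ∫ ω, (v ω) ^ 3 ∂μ = 0) (hEε3 : ∀ j, ∫ ω, (ε j ω) ^ 3 ∂μ = 0)
    (κv κε : ℝ) (hEv4 : ∫ ω, (v ω) ^ 4 ∂μ = κv * τsq ^ 2)
    (hEε4 : ∀ j, ∫ ω, (ε j ω) ^ 4 ∂μ = κε * (s j) ^ 2)
    (η : ℝ) (hη : η = 1 + τsq * ∑ h, (s h)⁻¹)
    (lam : Fin n → ℝ) (hlam : ∀ j, lam j = τsq * (s j)⁻¹ * η⁻¹)
    (w : Ω → ℝ) (hw : ∀ ω, w ω = (∑ h, lam h - 1) * v ω + ∑ h, lam h * ε h ω) :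
    ∀ j, ∫ ω, (∑ h, ((v ω + ε h ω) ^ 2 - s h - τsq)) * (v ω + ε j ω) * w ω ∂μ
      = τsq * η⁻¹ * ((n : ℝ) * τsq * (3 - κv) + s j * (κε - 3)) := by
  intro j
  let X : Option (Fin n) → Ω → ℝ := fun i => i.elim v ε
  let m : Option (Fin n) → ℝ := fun i => i.elim τsq s
  let q : Option (Fin n) → ℝ := fun i => i.elim (κv * τsq ^ 2) fun h => κε * s h ^ 2
  let y : Fin n → Option (Fin n) → ℝ := fun h i => i.elim 1 fun k => if k = h then 1 else 0
  let W : Option (Fin n) → ℝ := fun i => i.elim (∑ h, lam h - 1) lam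
  have hX : ∀ i, Measurable (X i) := fun i => by cases i <;> simp [X, hv, hε]
  have hX4 : ∀ i, MemLp (X i) 4 μ := fun i => by cases i <;> simp [X, hv4, hε4]
  have h1 : ∀ i, ∫ ω, X i ω ∂μ = 0 := fun i => by cases i <;> simp [X, hEv, hEε]
  have hm : ∀ i, ∫ ω, X i ω ^ 2 ∂μ = m i := fun i => by cases i <;> simp [X, m, hEvsq, hEεsq]
  have hq : ∀ i, ∫ ω, X i ω ^ 4 ∂μ = q i := fun i => by cases i <;> simp [X, q, hEv4, hEε4]
  have hy : ∀ h ω, v ω + ε h ω = ∑ i, y h i * X i ω := fun h ω => by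
    simp [Fintype.sum_option, y, X]
  have hW : ∀ ω, w ω = ∑ i, W i * X i ω := fun ω => by
    simp [Fintype.sum_option, W, X, hw]
  have hη0 : η ≠ 0 := by
    have : 0 ≤ ∑ h, (s h)⁻¹ := Finset.sum_nonneg fun h _ => (inv_pos.2 (hs h)).le
    rw [hη]
    positivity
  have hsum : ∑ h, lam h - 1 = -η⁻¹ := by
    simp only [hlam, ← Finset.sum_mul, ← Finset.mul_sum]
    rw [show τsq * ∑ h, (s h)⁻¹ = η - 1 by rw [hη]; ring]
    field_simp
    ring
  have hlams : ∀ h, lam h * s h = τsq * η⁻¹ := fun h => by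
    have := (hs h).ne'
    rw [hlam]
    field_simp
  have hyW : ∀ h, ∑ i, y h i * W i * m i = 0 := fun h => by
    simp [Fintype.sum_option, y, W, m, hsum, hlams, mul_comm τsq]
  have hexcess : ∀ h, ∑ i, y h i * y h i * y j i * W i * (q i - 3 * m i ^ 2)
      = τsq * η⁻¹ * (τsq * (3 - κv)) + if j = h then τsq * η⁻¹ * (s j * (κε - 3)) else 0 :=
    fun h => by
    simp only [Fintype.sum_option, y, W, m, q, Option.elim_none, Option.elim_some, hsum,
      mul_ite, ite_mul, mul_one, one_mul, mul_zero, zero_mul, Finset.sum_ite_eq',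
      Finset.mem_univ, if_true]
    congr 1
    · ring
    · split_ifs
      · rw [← hlams j]
        ring
      · rfl
  have hy4 : ∀ h, MemLp (fun ω => v ω + ε h ω) 4 μ := fun h => hv4.add (hε4 h)
  have hw4 : MemLp w 4 μ := by
    rw [funext hW]
    exact memLp_linearForm hX4 W
  have hcov : ∫ ω, (v ω + ε j ω) * w ω ∂μ = 0 := by
    simp only [hy, hW]
    rw [integral_linearForm_mul hX hX4 hindep h1 hm, hyW]
  have hquart : ∀ h, ∫ ω, (v ω + ε h ω) * (v ω + ε h ω) * ((v ω + ε j ω) * w ω) ∂μ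
      = τsq * η⁻¹ * (τsq * (3 - κv)) + if j = h then τsq * η⁻¹ * (s j * (κε - 3)) else 0 :=
    fun h => by
    simp only [hy, hW]
    rw [integral_linearForm_mul_four hX hX4 hindep h1 hm hq, hyW, hyW, hexcess]
    ring
  have hint2 : Integrable (fun ω => (v ω + ε j ω) * w ω) μ :=
    integrable_mul_of_memLp_four (hy4 j) hw4
  have hint4 : ∀ h, Integrable
      (fun ω => (v ω + ε h ω) * (v ω + ε h ω) * ((v ω + ε j ω) * w ω)) μ :=
    fun h => integrable_mul_four_of_memLp_four (hy4 h) (hy4 h) (hy4 j) hw4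
  have hsplit : ∀ ω, (∑ h, ((v ω + ε h ω) ^ 2 - s h - τsq)) * (v ω + ε j ω) * w ω
      = ∑ h, ((v ω + ε h ω) * (v ω + ε h ω) * ((v ω + ε j ω) * w ω)
        - (s h + τsq) * ((v ω + ε j ω) * w ω)) := fun ω => by
    rw [mul_assoc, Finset.sum_mul]
    exact Finset.sum_congr rfl fun h _ => by ring
  simp only [hsplit]
  rw [integral_finsetSum _ fun h _ => by exact (hint4 h).sub (hint2.const_mul _)]
  simp only [integral_sub (hint4 _) (hint2.const_mul _), integral_const_mul, hcov, hquart,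
    mul_zero, sub_zero, Finset.sum_add_distrib, Finset.sum_ite_eq, Finset.mem_univ, if_true,
    Finset.sum_const, Finset.card_univ, Fintype.card_fin, nsmul_eq_mul]
  ring
end

section
/- Under the one-cluster model with finite fourth moments, writing ε̄ = n^{-1} Σ_{k=1}^n ε_k, for all j, h ∈ {1, …, n}: E[ (ε_h − ε̄)² (v + ε_j) w ] = τ² η^{-1} (κ_ε − 3) σ_j² ( (1 − 2 n^{-1}) · 1{j = h} + n^{-2} ), where w = (Σ_{k=1}^n λ_k − 1) v + Σ_{k=1}^n λ_k ε_k. (This is the per-observation identity behind the cross-moment vector M_{2ij}(φ, κ) involving the estimating-function statistic u_{2i} for the variance-function parameter γ.) -/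
open MeasureTheory ProbabilityTheory

/-- The product of four functions in `L⁴` is integrable. -/
lemma MeasureTheory.MemLp.integrable_mul_four {Ω : Type*} [MeasurableSpace Ω] {μ : Measure Ω}
    {f g p q : Ω → ℝ} (hf : MemLp f 4 μ) (hg : MemLp g 4 μ) (hp : MemLp p 4 μ)
    (hq : MemLp q 4 μ) : Integrable (fun ω => f ω * g ω * (p ω * q ω)) μ := by
  have holder : ENNReal.HolderTriple 4 4 2 := ⟨by
    rw [← two_mul, show (4 : ENNReal) = 2 * 2 by norm_num,
      ENNReal.mul_inv (by simp) (by simp), ← mul_assoc,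
      ENNReal.mul_inv_cancel (by simp) (by simp), one_mul]⟩
  have hfg : MemLp (fun ω => f ω * g ω) 2 μ := hg.mul' hf
  have hpq : MemLp (fun ω => p ω * q ω) 2 μ := hq.mul' hp
  exact hfg.integrable_mul hpq

/-- A centred member of an independent family is orthogonal to products of three other members. -/
lemma ProbabilityTheory.iIndepFun.integral_mul_mul_mul_eq_zero_s14 {Ω ι : Type*} [MeasurableSpace Ω]
    [DecidableEq ι] {μ : Measure Ω} {X : ι → Ω → ℝ} (hX : ∀ i, Measurable (X i))
    (hindep : iIndepFun X μ) {i j k l : ι} (hi : ∫ ω, X i ω ∂μ = 0)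
    (hij : i ≠ j) (hik : i ≠ k) (hil : i ≠ l) :
    ∫ ω, X i ω * (X j ω * X k ω * X l ω) ∂μ = 0 := by
  have hdisj : Disjoint ({i} : Finset ι) {j, k, l} := by simp [hij, hik, hil]
  have hfin := hindep.indepFun_finset {i} {j, k, l} hdisj hX
  have hcomp : IndepFun (X i) (fun ω => X j ω * X k ω * X l ω) μ :=
    hfin.comp
      (φ := fun x : ({i} : Finset ι) → ℝ => x ⟨i, by simp⟩)
      (ψ := fun x : ({j, k, l} : Finset ι) → ℝ =>
        x ⟨j, by simp⟩ * x ⟨k, by simp⟩ * x ⟨l, by simp⟩)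
      (by fun_prop) (by fun_prop)
  rw [hcomp.integral_fun_mul_eq_mul_integral (hX i).aestronglyMeasurable
    (((hX j).mul (hX k)).mul (hX l)).aestronglyMeasurable, hi, zero_mul]

/-- Fourth-order mixed moments of a centred independent family. -/
lemma ProbabilityTheory.iIndepFun.integral_mul_four {Ω ι : Type*} [MeasurableSpace Ω]
    [DecidableEq ι] {μ : Measure Ω} {X : ι → Ω → ℝ} (hX : ∀ i, Measurable (X i))
    (hindep : iIndepFun X μ) (hmean : ∀ i, ∫ ω, X i ω ∂μ = 0) {m₂ m₄ : ι → ℝ}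
    (h₂ : ∀ i, ∫ ω, X i ω ^ 2 ∂μ = m₂ i) (h₄ : ∀ i, ∫ ω, X i ω ^ 4 ∂μ = m₄ i) (i j k l : ι) :
    ∫ ω, X i ω * X j ω * (X k ω * X l ω) ∂μ =
      (if i = j then if k = l then m₂ i * m₂ k else 0 else 0)
      + (if i = k then if j = l then m₂ i * m₂ j else 0 else 0)
      + (if i = l then if j = k then m₂ i * m₂ j else 0 else 0)
      + (if i = j then if i = k then if i = l then m₄ i - 3 * m₂ i ^ 2 else 0 else 0 else 0) := by
  have hzero : ∀ {a b c d : ι}, a ≠ b → a ≠ c → a ≠ d →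
      ∫ ω, X a ω * (X b ω * X c ω * X d ω) ∂μ = 0 := fun hab hac had =>
    hindep.integral_mul_mul_mul_eq_zero_s14 hX (hmean _) hab hac had
  have hpair : ∀ {a b : ι}, a ≠ b → ∫ ω, X a ω ^ 2 * X b ω ^ 2 ∂μ = m₂ a * m₂ b := by
    intro a b hab
    have hsq : IndepFun (fun ω => X a ω ^ 2) (fun ω => X b ω ^ 2) μ :=
      (hindep.indepFun hab).comp (φ := fun x : ℝ => x ^ 2) (ψ := fun x : ℝ => x ^ 2)
        (by fun_prop) (by fun_prop)
    rw [hsq.integral_fun_mul_eq_mul_integral ((hX a).pow_const 2).aestronglyMeasurable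
      ((hX b).pow_const 2).aestronglyMeasurable, h₂, h₂]
  by_cases hij : i = j
  · subst hij
    by_cases hkl : k = l
    · subst hkl
      by_cases hik : i = k
      · subst hik
        have hpow : ∀ ω, X i ω * X i ω * (X i ω * X i ω) = X i ω ^ 4 := fun ω => by ring
        simp only [hpow, h₄, if_true]
        ring
      · have hpow : ∀ ω, X i ω * X i ω * (X k ω * X k ω) = X i ω ^ 2 * X k ω ^ 2 :=
          fun ω => by ring
        simp [hpow, hpair hik, hik]
    · by_cases hik : i = k
      · subst hik
        have hcomm : ∀ ω, X i ω * X i ω * (X i ω * X l ω) = X l ω * (X i ω * X i ω * X i ω) :=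
          fun ω => by ring
        simp [hcomm, hzero (Ne.symm hkl) (Ne.symm hkl) (Ne.symm hkl), hkl]
      · have hcomm : ∀ ω, X i ω * X i ω * (X k ω * X l ω) = X k ω * (X i ω * X i ω * X l ω) :=
          fun ω => by ring
        simp [hcomm, hzero (Ne.symm hik) (Ne.symm hik) hkl, hkl, hik]
  · by_cases hik : i = k
    · subst hik
      by_cases hjl : j = l
      · subst hjl
        have hpow : ∀ ω, X i ω * X j ω * (X i ω * X j ω) = X i ω ^ 2 * X j ω ^ 2 :=
          fun ω => by ring
        simp [hpow, hpair hij, hij]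
      · have hcomm : ∀ ω, X i ω * X j ω * (X i ω * X l ω) = X j ω * (X i ω * X i ω * X l ω) :=
          fun ω => by ring
        simp [hcomm, hzero (Ne.symm hij) (Ne.symm hij) hjl, hij, Ne.symm hij, hjl]
    · by_cases hil : i = l
      · subst hil
        by_cases hjk : j = k
        · subst hjk
          have hpow : ∀ ω, X i ω * X j ω * (X j ω * X i ω) = X i ω ^ 2 * X j ω ^ 2 :=
            fun ω => by ring
          simp [hpow, hpair hij, hij]
        · have hcomm : ∀ ω, X i ω * X j ω * (X k ω * X i ω) = X j ω * (X i ω * X i ω * X k ω) :=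
            fun ω => by ring
          simp [hcomm, hzero (Ne.symm hij) (Ne.symm hij) hjk, hij, hik, hjk]
      · have hcomm : ∀ ω, X i ω * X j ω * (X k ω * X l ω) = X i ω * (X j ω * X k ω * X l ω) :=
          fun ω => by ring
        simp [hcomm, hzero hij hik hil, hij, hik, hil]

/-- Expectation of a product of four linear forms in a centred independent family: the three
Gaussian pairings plus the excess-kurtosis term. -/
lemma ProbabilityTheory.iIndepFun.integral_linearForm_mul_four {Ω ι : Type*} [MeasurableSpace Ω]
    [Fintype ι] {μ : Measure Ω} {X : ι → Ω → ℝ} (hX : ∀ i, Measurable (X i))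
    (hindep : iIndepFun X μ) (hX4 : ∀ i, MemLp (X i) 4 μ) (hmean : ∀ i, ∫ ω, X i ω ∂μ = 0)
    {m₂ m₄ : ι → ℝ} (h₂ : ∀ i, ∫ ω, X i ω ^ 2 ∂μ = m₂ i) (h₄ : ∀ i, ∫ ω, X i ω ^ 4 ∂μ = m₄ i)
    (a b c d : ι → ℝ) :
    ∫ ω, (∑ i, a i * X i ω) * (∑ i, b i * X i ω)
        * ((∑ i, c i * X i ω) * (∑ i, d i * X i ω)) ∂μ =
      (∑ i, a i * b i * m₂ i) * (∑ i, c i * d i * m₂ i)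
      + (∑ i, a i * c i * m₂ i) * (∑ i, b i * d i * m₂ i)
      + (∑ i, a i * d i * m₂ i) * (∑ i, b i * c i * m₂ i)
      + ∑ i, a i * b i * c i * d i * (m₄ i - 3 * m₂ i ^ 2) := by
  classical
  have hexpand : ∀ ω, (∑ i, a i * X i ω) * (∑ i, b i * X i ω)
      * ((∑ i, c i * X i ω) * (∑ i, d i * X i ω)) =
      ∑ i, ∑ j, ∑ k, ∑ l, a i * b j * c k * d l * (X i ω * X j ω * (X k ω * X l ω)) := by
    intro ω
    rw [Finset.sum_mul_sum, Finset.sum_mul_sum, Finset.sum_mul]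
    refine Finset.sum_congr rfl fun i _ => ?_
    rw [Finset.sum_mul]
    refine Finset.sum_congr rfl fun j _ => ?_
    rw [Finset.mul_sum]
    refine Finset.sum_congr rfl fun k _ => ?_
    rw [Finset.mul_sum]
    exact Finset.sum_congr rfl fun l _ => by ring
  have hint : ∀ i j k l, Integrable
      (fun ω => a i * b j * c k * d l * (X i ω * X j ω * (X k ω * X l ω))) μ := fun i j k l =>
    ((hX4 i).integrable_mul_four (hX4 j) (hX4 k) (hX4 l)).const_mul _
  have hintegral : ∫ ω, (∑ i, a i * X i ω) * (∑ i, b i * X i ω)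
      * ((∑ i, c i * X i ω) * (∑ i, d i * X i ω)) ∂μ =
      ∑ i, ∑ j, ∑ k, ∑ l, a i * b j * c k * d l * ∫ ω, X i ω * X j ω * (X k ω * X l ω) ∂μ := by
    simp_rw [hexpand]
    rw [integral_finsetSum _ fun i _ => integrable_finsetSum _ fun j _ =>
      integrable_finsetSum _ fun k _ => integrable_finsetSum _ fun l _ => hint i j k l]
    refine Finset.sum_congr rfl fun i _ => ?_
    rw [integral_finsetSum _ fun j _ =>
      integrable_finsetSum _ fun k _ => integrable_finsetSum _ fun l _ => hint i j k l]
    refine Finset.sum_congr rfl fun j _ => ?_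
    rw [integral_finsetSum _ fun k _ => integrable_finsetSum _ fun l _ => hint i j k l]
    refine Finset.sum_congr rfl fun k _ => ?_
    rw [integral_finsetSum _ fun l _ => hint i j k l]
    exact Finset.sum_congr rfl fun l _ => integral_const_mul _ _
  rw [hintegral]
  simp_rw [hindep.integral_mul_four hX hmean h₂ h₄, mul_add, Finset.sum_add_distrib]
  simp only [mul_ite, mul_zero, Finset.sum_ite_irrel, Finset.sum_const_zero, Finset.sum_ite_eq,
    Finset.mem_univ, if_true, Finset.sum_mul_sum]
  congr 1
  congr 1
  congr 1
  all_goals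
    refine Finset.sum_congr rfl fun i _ => Finset.sum_congr rfl fun j _ => by ring

/-- In the one-cluster model with finite fourth moments, with
`ε̄ = n⁻¹ ∑ ε_k`, for all `j, h`:
`E[(ε_h − ε̄)² (v+ε_j) w] = τ² η⁻¹ (κ_ε − 3) σ_j² ((1 − 2n⁻¹) 1{j=h} + n⁻²)`,
where `w = (∑ λ_k − 1) v + ∑ λ_k ε_k`. -/
theorem stmt_14 {Ω : Type*} [MeasurableSpace Ω] (μ : Measure Ω) [IsProbabilityMeasure μ]
    (n : ℕ) (hn : 1 ≤ n) (v : Ω → ℝ) (ε : Fin n → Ω → ℝ)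
    (hv : Measurable v) (hε : ∀ j, Measurable (ε j))
    (hindep : iIndepFun (m := fun _ : Option (Fin n) => (inferInstance : MeasurableSpace ℝ))
      (fun i => Option.elim i v ε) μ)
    (τsq : ℝ) (hτ : 0 ≤ τsq) (s : Fin n → ℝ) (hs : ∀ j, 0 < s j)
    (hv4 : MemLp v 4 μ) (hε4 : ∀ j, MemLp (ε j) 4 μ)
    (hEv : ∫ ω, v ω ∂μ = 0) (hEvsq : ∫ ω, (v ω) ^ 2 ∂μ = τsq)
    (hEε : ∀ j, ∫ ω, ε j ω ∂μ = 0) (hEεsq : ∀ j, ∫ ω, (ε j ω) ^ 2 ∂μ = s j)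
    (hEv3 : ∫ ω, (v ω) ^ 3 ∂μ = 0) (hEε3 : ∀ j, ∫ ω, (ε j ω) ^ 3 ∂μ = 0)
    (κv κε : ℝ) (hEv4 : ∫ ω, (v ω) ^ 4 ∂μ = κv * τsq ^ 2)
    (hEε4 : ∀ j, ∫ ω, (ε j ω) ^ 4 ∂μ = κε * (s j) ^ 2)
    (η : ℝ) (hη : η = 1 + τsq * ∑ h, (s h)⁻¹)
    (lam : Fin n → ℝ) (hlam : ∀ j, lam j = τsq * (s j)⁻¹ * η⁻¹)
    (w : Ω → ℝ) (hw : ∀ ω, w ω = (∑ h, lam h - 1) * v ω + ∑ h, lam h * ε h ω) :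
    ∀ j h, ∫ ω, (ε h ω - (n : ℝ)⁻¹ * ∑ k, ε k ω) ^ 2 * (v ω + ε j ω) * w ω ∂μ
      = τsq * η⁻¹ * (κε - 3) * s j
          * ((1 - 2 * (n : ℝ)⁻¹) * (if j = h then 1 else 0) + ((n : ℝ) ^ 2)⁻¹) := by
  intro j h
  have hη_pos : 0 < η := by
    rw [hη]
    have hsum : 0 ≤ ∑ k, (s k)⁻¹ := Finset.sum_nonneg fun k _ => (inv_pos.mpr (hs k)).le
    positivity
  have hn_ne : (n : ℝ) ≠ 0 := by exact_mod_cast (by omega : n ≠ 0)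
  have hlam_mul : ∀ k, lam k * s k = τsq * η⁻¹ := fun k => by
    rw [hlam]
    field_simp [(hs k).ne']
  have hlam_sum : ∑ k, lam k - 1 = -η⁻¹ := by
    have hfactor : ∑ k, lam k = τsq * (∑ k, (s k)⁻¹) * η⁻¹ := by
      simp_rw [hlam, Finset.mul_sum, Finset.sum_mul]
    rw [hfactor, show τsq * ∑ k, (s k)⁻¹ = η - 1 by rw [hη]; ring]
    field_simp
    ring
  let X : Option (Fin n) → Ω → ℝ := fun i => i.elim v ε
  let m₂ : Option (Fin n) → ℝ := fun i => i.elim τsq s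
  let m₄ : Option (Fin n) → ℝ := fun i => i.elim (κv * τsq ^ 2) fun k => κε * s k ^ 2
  let a : Option (Fin n) → ℝ := fun i => i.elim 0 fun k => (if k = h then 1 else 0) - (n : ℝ)⁻¹
  let c : Option (Fin n) → ℝ := fun i => i.elim 1 fun k => if k = j then 1 else 0
  let d : Option (Fin n) → ℝ := fun i => i.elim (-η⁻¹) lam
  have hmoment := iIndepFun.integral_linearForm_mul_four (X := X) (m₂ := m₂) (m₄ := m₄)
    (Option.forall.2 ⟨hv, hε⟩) hindep (Option.forall.2 ⟨hv4, hε4⟩) (Option.forall.2 ⟨hEv, hEε⟩)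
    (Option.forall.2 ⟨hEvsq, hEεsq⟩) (Option.forall.2 ⟨hEv4, hEε4⟩) a a c d
  have hA : ∀ ω, ∑ i, a i * X i ω = ε h ω - (n : ℝ)⁻¹ * ∑ k, ε k ω := fun ω => by
    simp [a, X, Fintype.sum_option, sub_mul, Finset.sum_sub_distrib, Finset.mul_sum]
  have hC : ∀ ω, ∑ i, c i * X i ω = v ω + ε j ω := fun ω => by
    simp [c, X, Fintype.sum_option]
  have hD : ∀ ω, ∑ i, d i * X i ω = w ω := fun ω => by
    simp [d, X, Fintype.sum_option, hw, hlam_sum]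
  have hcd : ∑ i, c i * d i * m₂ i = 0 := by
    simp only [c, d, m₂, Fintype.sum_option, Option.elim, ite_mul, one_mul, zero_mul,
      Finset.sum_ite_eq', Finset.mem_univ, if_true, hlam_mul]
    ring
  have had : ∑ i, a i * d i * m₂ i = 0 := by
    simp only [a, d, m₂, Fintype.sum_option, Option.elim, mul_assoc, hlam_mul, zero_mul, zero_add]
    rw [← Finset.sum_mul, Finset.sum_sub_distrib]
    simp [hn_ne]
  have hkurt : ∑ i, a i * a i * c i * d i * (m₄ i - 3 * m₂ i ^ 2) =
      ((if j = h then 1 else 0) - (n : ℝ)⁻¹) ^ 2 * (κε - 3) * s j * (lam j * s j) := by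
    simp only [a, c, d, m₂, m₄, Fintype.sum_option, Option.elim, mul_ite, mul_one, mul_zero,
      zero_mul, ite_mul, Finset.sum_ite_eq', Finset.mem_univ, if_true]
    ring
  simp_rw [hA, hC, hD] at hmoment
  rw [hcd, had, hkurt, hlam_mul] at hmoment
  have hassoc : ∀ ω, (ε h ω - (n : ℝ)⁻¹ * ∑ k, ε k ω) ^ 2 * (v ω + ε j ω) * w ω =
      (ε h ω - (n : ℝ)⁻¹ * ∑ k, ε k ω) * (ε h ω - (n : ℝ)⁻¹ * ∑ k, ε k ω)
        * ((v ω + ε j ω) * w ω) := fun ω => by ring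
  simp_rw [hassoc]
  rw [hmoment]
  split_ifs <;> ring
end
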